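/- arXiv:2112.05604 — 4 statements merged into one kernel-verified Lean document; each statement's English description precedes it below -/
import Mathlib

section
/- (Proposition 2.2(a), stationarity conversion) Let ε ≥ 0 and suppose the pair (x̂, ŷ) satisfies max_y f(x̂,y) − f(x̂,ŷ) ≤ ε²/(l·κ), and suppose ‖∇_x f(x̂, y⋆)‖ ≤ ε for some maximizer y⋆ ∈ Argmax_y f(x̂, y). Then ‖∇_y f(x̂, ŷ)‖ ≤ √2·ε and ‖∇_x f(x̂, ŷ)‖ ≤ (1 + √2)·ε. -/
open MeasureTheory Real

/-- Partial gradient of `f` in the first (primal) variable. -/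
noncomputable def gradx {d1 d2 : ℕ}
    (f : EuclideanSpace ℝ (Fin d1) → EuclideanSpace ℝ (Fin d2) → ℝ)
    (x : EuclideanSpace ℝ (Fin d1)) (y : EuclideanSpace ℝ (Fin d2)) :
    EuclideanSpace ℝ (Fin d1) :=
  gradient (fun x' => f x' y) x

/-- Partial gradient of `f` in the second (dual) variable. -/
noncomputable def grady {d1 d2 : ℕ}
    (f : EuclideanSpace ℝ (Fin d1) → EuclideanSpace ℝ (Fin d2) → ℝ)
    (x : EuclideanSpace ℝ (Fin d1)) (y : EuclideanSpace ℝ (Fin d2)) :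
    EuclideanSpace ℝ (Fin d2) :=
  gradient (f x) y

/-- The primal function `Φ(x) = max_y f(x,y)`. -/
noncomputable def primal {d1 d2 : ℕ}
    (f : EuclideanSpace ℝ (Fin d1) → EuclideanSpace ℝ (Fin d2) → ℝ)
    (x : EuclideanSpace ℝ (Fin d1)) : ℝ :=
  ⨆ y, f x y

lemma grad_norm_le_of_slope {E : Type*} [NormedAddCommGroup E] [InnerProductSpace ℝ E]
    [CompleteSpace E] (g : E → ℝ) (z : E) (hd : DifferentiableAt ℝ g z) (K : ℝ)
    (h : ∀ w, g w - g z ≤ K * ‖w - z‖) : ‖gradient g z‖ ≤ K ∨ gradient g z = 0 := by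
  by_cases h0 : gradient g z = 0
  · exact Or.inr h0
  left
  have hpos : 0 < ‖gradient g z‖ := norm_pos_iff.mpr h0
  set v := gradient g z with hv
  have hg : HasFDerivAt g (InnerProductSpace.toDual ℝ E v) z := hd.hasGradientAt.hasFDerivAt
  have hline : HasDerivAt (fun t : ℝ => z + t • v) v 0 := by
    simpa using ((hasDerivAt_id (0 : ℝ)).smul_const v).const_add z
  have hg' : HasFDerivAt g (InnerProductSpace.toDual ℝ E v) (z + (0 : ℝ) • v) := by
    simpa using hg
  have hc : HasDerivAt (fun t : ℝ => g (z + t • v)) (‖v‖ ^ 2) 0 := by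
    have := hg'.comp_hasDerivAt (0 : ℝ) hline
    simpa [Function.comp_def] using this
  have ht := hc.hasDerivWithinAt (s := Set.Ioi 0)
  rw [hasDerivWithinAt_iff_tendsto_slope' (by simp)] at ht
  have hle : ‖v‖ ^ 2 ≤ K * ‖v‖ := by
    refine le_of_tendsto ht ?_
    filter_upwards [self_mem_nhdsWithin] with t htp
    have htp : 0 < t := htp
    have := h (z + t • v)
    simp only [add_sub_cancel_left, norm_smul, Real.norm_eq_abs, abs_of_pos htp] at this
    rw [slope_def_field]
    simp only [zero_smul, add_zero, sub_zero]
    rw [div_le_iff₀ htp]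
    linarith
  nlinarith

lemma exists_near_max {d : ℕ} (g : EuclideanSpace ℝ (Fin d) → ℝ) (hd : Differentiable ℝ g)
    (M μ c : ℝ) (hM : ∀ y, g y ≤ M)
    (hPL : ∀ y, 2 * μ * (M - g y) ≤ ‖gradient g y‖ ^ 2) (hc : 0 < c) (hcμ : 2 * c ^ 2 < μ)
    (y : EuclideanSpace ℝ (Fin d)) :
    ∃ z, g z = M ∧ c * ‖y - z‖ ≤ Real.sqrt (M - g y) := by
  have hcont : Continuous (fun z => Real.sqrt (M - g z) + c * ‖z - y‖) := by
    have := hd.continuous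
    fun_prop
  have hlim : Filter.Tendsto (fun z => Real.sqrt (M - g z) + c * ‖z - y‖)
      (Filter.cocompact _) Filter.atTop := by
    have h1 : Filter.Tendsto (fun z : EuclideanSpace ℝ (Fin d) => c * (‖z‖ - ‖y‖))
        (Filter.cocompact _) Filter.atTop :=
      (Filter.tendsto_atTop_add_const_right _ (-‖y‖)
        (tendsto_norm_cocompact_atTop)).const_mul_atTop hc
    refine Filter.tendsto_atTop_mono (fun z => ?_) h1
    have h2 := norm_sub_norm_le z y
    have h3 := Real.sqrt_nonneg (M - g z)
    nlinarith
  obtain ⟨z, hz⟩ := hcont.exists_forall_le hlim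
  have hzy := hz y
  simp only [sub_self, norm_zero, mul_zero, add_zero] at hzy
  have hs0 := Real.sqrt_nonneg (M - g z)
  have hdz : c * ‖y - z‖ ≤ Real.sqrt (M - g y) := by
    rw [norm_sub_rev]; linarith
  refine ⟨z, ?_, hdz⟩
  by_contra hne
  have hlt : 0 < M - g z := sub_pos.mpr (lt_of_le_of_ne (hM z) hne)
  have hs := Real.sqrt_pos.mpr hlt
  have hsq := Real.sq_sqrt hlt.le
  set s := Real.sqrt (M - g z) with hsdef
  have hslope : ∀ w, g w - g z ≤ (2 * s * c) * ‖w - z‖ := by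
    intro w
    have h1 := hz w
    have htri : ‖w - y‖ ≤ ‖w - z‖ + ‖z - y‖ := norm_sub_le_norm_sub_add_norm_sub w z y
    have hw0 := Real.sqrt_nonneg (M - g w)
    have hwsq := Real.sq_sqrt (sub_nonneg.mpr (hM w))
    set r := Real.sqrt (M - g w)
    have hn := norm_nonneg (w - z)
    have h2 : s - r ≤ c * ‖w - z‖ := by nlinarith
    have hcn : 0 ≤ c * ‖w - z‖ := by positivity
    have h3 : s ^ 2 - r ^ 2 ≤ 2 * s * (c * ‖w - z‖) := by
      nlinarith [sq_nonneg (s - r)]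
    nlinarith
  have hp := hPL z
  rcases grad_norm_le_of_slope g z (hd z) _ hslope with h | h
  · have h1 : ‖gradient g z‖ ^ 2 ≤ (2 * s * c) ^ 2 := pow_le_pow_left₀ (norm_nonneg _) h 2
    have h2 : 0 < s ^ 2 := by positivity
    rw [← hsq] at hp
    nlinarith
  · rw [h] at hp
    simp only [norm_zero] at hp
    have : 0 < μ := lt_of_le_of_lt (by positivity) hcμ
    have : 0 < μ * (M - g z) := mul_pos this hlt
    nlinarith

lemma gradx_eq_of_max {E : Type*} [NormedAddCommGroup E] [InnerProductSpace ℝ E]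
    [CompleteSpace E] (u v : E → ℝ) (x : E) (hu : DifferentiableAt ℝ u x)
    (hv : DifferentiableAt ℝ v x) (hx : u x = v x) (C : ℝ)
    (h : ∀ w, u w ≤ v w + C * ‖w - x‖ ^ 2) : gradient u x = gradient v x := by
  have hq : HasFDerivAt (fun w : E => C * ‖w - x‖ ^ 2) (0 : E →L[ℝ] ℝ) x := by
    have := (((hasFDerivAt_id x).sub_const x).norm_sq).const_mul C
    simpa using this
  have hD := (hu.hasFDerivAt.sub hv.hasFDerivAt).sub hq
  have hmax : IsLocalMax ((u - v) - (fun w : E => C * ‖w - x‖ ^ 2)) x := by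
    refine Filter.Eventually.of_forall (fun w => ?_)
    have := h w
    simp [hx]
    linarith
  have h0 := hmax.hasFDerivAt_eq_zero hD
  rw [sub_zero, sub_eq_zero] at h0
  simp only [gradient, h0]

lemma mul_le_of_forall_lt' (c0 A B : ℝ) (hc0 : 0 < c0) (hB : 0 ≤ B)
    (h : ∀ c, 0 < c → c < c0 → c * A ≤ B) : c0 * A ≤ B := by
  by_contra hlt
  push Not at hlt
  have hA : 0 < A := by
    by_contra hA
    nlinarith
  obtain ⟨c, h1, h2⟩ := exists_between ((div_lt_iff₀ hA).mpr hlt)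
  have h3 := h c (lt_of_le_of_lt (by positivity) h1) h2
  rw [div_lt_iff₀ hA] at h1
  linarith

/-- **Proposition 2.2(a) (stationarity conversion).** If `max_y f(x̂,y) − f(x̂,ŷ) ≤ ε²/(lκ)` and
`‖∇_x f(x̂,y⋆)‖ ≤ ε` for some maximizer `y⋆` of `f(x̂,·)`, then `(x̂,ŷ)` is an
`O(ε)`-stationary point of `f`. -/
theorem stationarity_conversion_a
    {d1 d2 : ℕ}
    (f : EuclideanSpace ℝ (Fin d1) → EuclideanSpace ℝ (Fin d2) → ℝ)
    (l μ : ℝ) (hl : 0 < l) (hμ : 0 < μ)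
    (hdiff : Differentiable ℝ
      (fun p : EuclideanSpace ℝ (Fin d1) × EuclideanSpace ℝ (Fin d2) => f p.1 p.2))
    (hlipx : ∀ x₁ x₂ y₁ y₂,
      ‖gradx f x₁ y₁ - gradx f x₂ y₂‖ ≤ l * (‖x₁ - x₂‖ + ‖y₁ - y₂‖))
    (hlipy : ∀ x₁ x₂ y₁ y₂,
      ‖grady f x₁ y₁ - grady f x₂ y₂‖ ≤ l * (‖x₁ - x₂‖ + ‖y₁ - y₂‖))
    (hattain : ∀ x, ∃ ys, ∀ y, f x y ≤ f x ys)
    (hPL : ∀ x y, 2 * μ * (primal f x - f x y) ≤ ‖grady f x y‖ ^ 2)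
    (κ : ℝ) (hκ : κ = l / μ)
    (ε : ℝ) (hε : 0 ≤ ε)
    (xh : EuclideanSpace ℝ (Fin d1)) (yh : EuclideanSpace ℝ (Fin d2))
    (hgap : primal f xh - f xh yh ≤ ε ^ 2 / (l * κ))
    (ystar : EuclideanSpace ℝ (Fin d2)) (hystar : ∀ y, f xh y ≤ f xh ystar)
    (hgx : ‖gradx f xh ystar‖ ≤ ε) :
    ‖grady f xh yh‖ ≤ Real.sqrt 2 * ε ∧
      ‖gradx f xh yh‖ ≤ (1 + Real.sqrt 2) * ε := by
  have hprim : ∀ x y, f x y ≤ primal f x := by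
    intro x y
    obtain ⟨ys, hys⟩ := hattain x
    exact le_ciSup (f := fun y => f x y) ⟨f x ys, by rintro _ ⟨w, rfl⟩; exact hys w⟩ y
  have hmaxeq : ∀ x y, (∀ w, f x w ≤ f x y) → f x y = primal f x := fun x y h =>
    le_antisymm (hprim x y) (ciSup_le h)
  have hdy : ∀ x, Differentiable ℝ (f x) := fun x =>
    hdiff.comp (by fun_prop : Differentiable ℝ (fun y => (x, y)))
  have hdx : ∀ y, Differentiable ℝ (fun x => f x y) := fun y =>
    hdiff.comp (by fun_prop : Differentiable ℝ (fun x => (x, y)))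
  have hgy0 : ∀ z, f xh z = primal f xh → grady f xh z = 0 := by
    intro z hz
    have hloc : IsLocalMax (f xh) z :=
      Filter.Eventually.of_forall (fun w => by rw [hz]; exact hprim xh w)
    simp [grady, gradient, hloc.fderiv_eq_zero]
  have hgxeq : ∀ z, f xh z = primal f xh → gradx f xh z = gradx f xh ystar := by
    intro z hz
    refine gradx_eq_of_max (fun x => f x z) (fun x => f x ystar) xh (hdx z xh) (hdx ystar xh)
      (by rw [hz, hmaxeq xh ystar hystar]) (l ^ 2 / (2 * μ)) (fun w => ?_)
    have h1 := hPL w ystar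
    have h2 := hlipy w xh ystar ystar
    rw [hgy0 ystar (hmaxeq xh ystar hystar)] at h2
    simp only [sub_zero, sub_self, norm_zero, add_zero] at h2
    have h3 := pow_le_pow_left₀ (norm_nonneg _) h2 2
    have h4 := hprim w z
    have h5 : primal f w - f w ystar ≤ l ^ 2 / (2 * μ) * ‖w - xh‖ ^ 2 := by
      rw [div_mul_eq_mul_div, le_div_iff₀ (by positivity)]
      nlinarith
    linarith
  have hgap' : l * Real.sqrt (primal f xh - f xh yh) ≤ Real.sqrt μ * ε := by
    have h0 : l ^ 2 * (primal f xh - f xh yh) ≤ μ * ε ^ 2 := by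
      rw [hκ] at hgap
      have : ε ^ 2 / (l * (l / μ)) = μ * ε ^ 2 / l ^ 2 := by field_simp
      rw [this, le_div_iff₀ (by positivity)] at hgap
      linarith
    refine abs_le_of_sq_le_sq' ?_ (by positivity) |>.2
    rw [mul_pow, mul_pow, Real.sq_sqrt (sub_nonneg.mpr (hprim xh yh)), Real.sq_sqrt hμ.le]
    exact h0
  have hkey : ∀ A : ℝ, (∀ z, f xh z = primal f xh → A ≤ l * ‖yh - z‖) →
      A ≤ Real.sqrt 2 * ε := by
    intro A hA
    have h1 : Real.sqrt (μ / 2) * A ≤ Real.sqrt μ * ε := by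
      refine mul_le_of_forall_lt' _ _ _ (by positivity) (by positivity) (fun c hc hlt => ?_)
      rw [Real.lt_sqrt hc.le] at hlt
      obtain ⟨z, hz, hzd⟩ := exists_near_max (f xh) (hdy xh) (primal f xh) μ c (hprim xh)
        (hPL xh) hc (by linarith) yh
      have h2 := hA z hz
      calc c * A ≤ c * (l * ‖yh - z‖) := by gcongr
        _ = l * (c * ‖yh - z‖) := by ring
        _ ≤ l * Real.sqrt (primal f xh - f xh yh) := by gcongr
        _ ≤ _ := hgap'
    have h2 : Real.sqrt μ = Real.sqrt (μ / 2) * Real.sqrt 2 := by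
      rw [← Real.sqrt_mul (by positivity)]
      congr 1
      ring
    rw [h2, mul_assoc] at h1
    exact le_of_mul_le_mul_left h1 (by positivity)
  constructor
  · refine hkey _ (fun z hz => ?_)
    have := hlipy xh xh yh z
    rw [hgy0 z hz] at this
    simpa using this
  · have : ‖gradx f xh yh - gradx f xh ystar‖ ≤ Real.sqrt 2 * ε := by
      refine hkey _ (fun z hz => ?_)
      have := hlipx xh xh yh z
      rw [hgxeq z hz] at this
      simpa using this
    have h2 := norm_sub_norm_le (gradx f xh yh) (gradx f xh ystar)
    linarith
end

section
/- (Proposition 2.2(b), Moreau-envelope bound by joint gradients) For any x̃ and ỹ, let prox_{Φ/2l}(x̃) denote the unique minimizer of z ↦ Φ(z) + l·‖z − x̃‖² (which exists and is unique because this function is l-strongly convex under Assumptions 1–2). Then 4·l²·‖x̃ − prox_{Φ/2l}(x̃)‖² ≤ 4·κ·‖∇_y f(x̃, ỹ)‖² + 4·‖∇_x f(x̃, ỹ)‖². -/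
open MeasureTheory Real

lemma aux_descent {E : Type*} [NormedAddCommGroup E] [InnerProductSpace ℝ E] [CompleteSpace E]
    (g : E → ℝ) (l : ℝ) (hg : Differentiable ℝ g)
    (hlip : ∀ a b, ‖gradient g a - gradient g b‖ ≤ l * ‖a - b‖) (x z : E) :
    g z + inner ℝ (gradient g z) (x - z) - l / 2 * ‖x - z‖ ^ 2 ≤ g x := by
  set v := x - z with hv
  let φ : ℝ → ℝ := fun s => g (z + s • v) - s * inner ℝ (gradient g z) v + l / 2 * s ^ 2 * ‖v‖ ^ 2
  have hd : ∀ s, HasDerivAt φ (inner ℝ (gradient g (z + s • v)) v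
      - inner ℝ (gradient g z) v + l * s * ‖v‖ ^ 2) s := by
    intro s
    have h1 : HasDerivAt (fun s : ℝ => z + s • v) v s := by
      simpa using ((hasDerivAt_id s).smul_const v).const_add z
    have h2 := (hg (z + s • v)).hasGradientAt.hasFDerivAt.comp_hasDerivAt s h1
    have h3 : HasDerivAt (fun s : ℝ => s * inner ℝ (gradient g z) v)
        (inner ℝ (gradient g z) v) s := by
      simpa using (hasDerivAt_id s).mul_const (inner ℝ (gradient g z) v)
    have h4 : HasDerivAt (fun s : ℝ => l / 2 * s ^ 2 * ‖v‖ ^ 2) (l * s * ‖v‖ ^ 2) s := by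
      have := ((hasDerivAt_pow 2 s).const_mul (l / 2)).mul_const (‖v‖ ^ 2)
      refine this.congr_deriv ?_
      push_cast; ring
    have := (h2.sub h3).add h4
    refine (this.congr_deriv ?_)
    rw [InnerProductSpace.toDual_apply_apply]
  have hm : MonotoneOn φ (Set.Ici 0) := by
    apply monotoneOn_of_deriv_nonneg (convex_Ici 0)
    · exact fun s _ => (hd s).continuousAt.continuousWithinAt
    · exact fun s _ => (hd s).differentiableAt.differentiableWithinAt
    · intro s hs
      have hs0 : 0 < s := by simpa using hs
      rw [(hd s).deriv, ← inner_sub_left]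
      have h1 := hlip (z + s • v) z
      have h2 := abs_le.1 (abs_real_inner_le_norm (gradient g (z + s • v) - gradient g z) v)
      rw [add_sub_cancel_left, norm_smul, Real.norm_of_nonneg hs0.le] at h1
      have h3 := mul_le_mul_of_nonneg_right h1 (norm_nonneg v)
      nlinarith [h2.1]
  have := hm (by simp : (0:ℝ) ∈ Set.Ici 0) (by simp : (1:ℝ) ∈ Set.Ici 0) zero_le_one
  simp [φ] at this
  have e : z + v = x := by simp [hv]
  rw [e] at this
  simp
  linarith

/-- **Proposition 2.2(b) (Moreau-envelope bound by joint gradients).** For the minimizer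
`xp = prox_{Φ/2l}(x̃)` of `z ↦ Φ(z) + l‖z − x̃‖²`, one has
`4l²‖x̃ − xp‖² ≤ 4κ‖∇_y f(x̃,ỹ)‖² + 4‖∇_x f(x̃,ỹ)‖²`. -/
theorem moreau_envelope_bound
    {d1 d2 : ℕ}
    (f : EuclideanSpace ℝ (Fin d1) → EuclideanSpace ℝ (Fin d2) → ℝ)
    (l μ : ℝ) (hl : 0 < l) (hμ : 0 < μ)
    (hdiff : Differentiable ℝ
      (fun p : EuclideanSpace ℝ (Fin d1) × EuclideanSpace ℝ (Fin d2) => f p.1 p.2))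
    (hlipx : ∀ x₁ x₂ y₁ y₂,
      ‖gradx f x₁ y₁ - gradx f x₂ y₂‖ ≤ l * (‖x₁ - x₂‖ + ‖y₁ - y₂‖))
    (hlipy : ∀ x₁ x₂ y₁ y₂,
      ‖grady f x₁ y₁ - grady f x₂ y₂‖ ≤ l * (‖x₁ - x₂‖ + ‖y₁ - y₂‖))
    (hattain : ∀ x, ∃ ys, ∀ y, f x y ≤ f x ys)
    (hPL : ∀ x y, 2 * μ * (primal f x - f x y) ≤ ‖grady f x y‖ ^ 2)
    (κ : ℝ) (hκ : κ = l / μ)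
    (xt : EuclideanSpace ℝ (Fin d1)) (yt : EuclideanSpace ℝ (Fin d2))
    (xp : EuclideanSpace ℝ (Fin d1))
    (hxp : ∀ z, primal f xp + l * ‖xp - xt‖ ^ 2 ≤ primal f z + l * ‖z - xt‖ ^ 2) :
    4 * l ^ 2 * ‖xt - xp‖ ^ 2 ≤
      4 * κ * ‖grady f xt yt‖ ^ 2 + 4 * ‖gradx f xt yt‖ ^ 2 := by
  have hdx : ∀ y, Differentiable ℝ (fun x => f x y) := fun y =>
    hdiff.comp (differentiable_id.prodMk (differentiable_const y))
  have hdesc : ∀ y x z, f z y + inner ℝ (gradx f z y) (x - z) - l / 2 * ‖x - z‖ ^ 2 ≤ f x y := by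
    intro y x z
    refine aux_descent (fun x => f x y) l (hdx y) ?_ x z
    intro a b
    simpa [gradx] using hlipx a b y y
  have hle : ∀ x y, f x y ≤ primal f x := by
    intro x y
    obtain ⟨ys, h⟩ := hattain x
    exact le_ciSup (f := fun y => f x y) ⟨f x ys, by rintro _ ⟨y, rfl⟩; exact h y⟩ y
  have hmax : ∀ x, ∃ y, primal f x = f x y := by
    intro x
    obtain ⟨ys, h⟩ := hattain x
    exact ⟨ys, le_antisymm (ciSup_le h) (hle x ys)⟩
  rw [norm_sub_rev xt xp]
  set r := ‖xp - xt‖ with hr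
  have hr0 : 0 ≤ r := norm_nonneg _
  have hsc : ∀ t : ℝ, 0 < t → t < 1 →
      primal f xp + 3 / 2 * l * r ^ 2 ≤ primal f xt + t * (l * r ^ 2 / 2) := by
    intro t ht ht1
    set z := xp + t • (xt - xp) with hz
    obtain ⟨y, hy⟩ := hmax z
    have e1 : xp - z = (-t) • (xt - xp) := by rw [hz]; module
    have e2 : xt - z = (1 - t) • (xt - xp) := by rw [hz]; module
    have e3 : z - xt = (1 - t) • (xp - xt) := by rw [hz]; module
    have h1 := hdesc y xp z
    have h2 := hdesc y xt z
    have h3 := hxp z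
    rw [e1, inner_smul_right, norm_smul, norm_sub_rev xt xp, Real.norm_eq_abs, abs_neg,
      abs_of_pos ht, ← hr] at h1
    rw [e2, inner_smul_right, norm_smul, norm_sub_rev xt xp, Real.norm_eq_abs,
      abs_of_pos (by linarith : 0 < 1 - t), ← hr] at h2
    rw [e3, norm_smul, Real.norm_eq_abs,
      abs_of_pos (by linarith : 0 < 1 - t), ← hr, hy] at h3
    have h4 := mul_le_mul_of_nonneg_left (h1.trans (hle xp y)) (by linarith : 0 ≤ 1 - t)
    have h5 := mul_le_mul_of_nonneg_left (h2.trans (hle xt y)) ht.le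
    refine le_of_mul_le_mul_left ?_ ht
    nlinarith [h3, h4, h5]
  have hsc0 : primal f xp + 3 / 2 * l * r ^ 2 ≤ primal f xt := by
    by_contra! hc
    set B := l * r ^ 2 / 2 with hB
    have hB0 : 0 ≤ B := by positivity
    set D := primal f xp + 3 / 2 * l * r ^ 2 - primal f xt with hD
    have hD0 : 0 < D := by linarith
    have ht : 0 < D / (2 * (D + B)) := by positivity
    have ht1 : D / (2 * (D + B)) < 1 := by
      rw [div_lt_one (by positivity)]; linarith
    have h := hsc _ ht ht1
    have h2 : D / (2 * (D + B)) * B < D := by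
      rw [div_mul_eq_mul_div, div_lt_iff₀ (by positivity)]
      nlinarith [mul_nonneg hD0.le hB0, mul_pos hD0 hD0]
    linarith
  have h1 := hdesc yt xp xt
  have h2 := (abs_le.1 (abs_real_inner_le_norm (gradx f xt yt) (xp - xt))).1
  rw [← hr] at h1 h2
  have h3 := hle xp yt
  have h4 := hPL xt yt
  set G := ‖grady f xt yt‖
  set g := ‖gradx f xt yt‖
  have h5 : l * r ^ 2 - g * r ≤ primal f xt - f xt yt := by linarith
  have h6 : primal f xt - f xt yt ≤ G ^ 2 / (2 * μ) := by
    rw [le_div_iff₀ (by positivity)]; linarith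
  have h7 := mul_le_mul_of_nonneg_left (h5.trans h6) hl.le
  have h8 : l * (G ^ 2 / (2 * μ)) = κ * G ^ 2 / 2 := by rw [hκ]; field_simp
  rw [h8] at h7
  nlinarith [sq_nonneg (l * r - g)]
end

section
/- (Lemma A.2, PL implies error bound and quadratic growth) Let h : ℝ^d → ℝ be differentiable with l-Lipschitz gradient, suppose its infimum h* is finite and the set S := Argmin h is nonempty, and suppose h satisfies the PL condition with constant μ > 0: ‖∇h(x)‖² ≥ 2μ(h(x) − h*) for all x. Then for every x: (error bound) ‖∇h(x)‖ ≥ μ·dist(x, S), and (quadratic growth) h(x) − h* ≥ (μ/2)·dist(x, S)², where dist(x, S) = inf_{z ∈ S} ‖x − z‖. -/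
open MeasureTheory Real

/-- **Lemma A.2 (PL implies error bound and quadratic growth).** If `h` is differentiable with
`l`-Lipschitz gradient, attains its finite infimum on the nonempty set `S = Argmin h`, and
satisfies the `μ`-PL condition, then `‖∇h(x)‖ ≥ μ·dist(x,S)` and
`h(x) − h* ≥ (μ/2)·dist(x,S)²` for all `x`. -/
theorem pl_implies_eb_and_qg
    {d : ℕ} (h : EuclideanSpace ℝ (Fin d) → ℝ)
    (l μ : ℝ) (hl : 0 < l) (hμ : 0 < μ)
    (hdiff : Differentiable ℝ h)
    (hlip : ∀ x y, ‖gradient h x - gradient h y‖ ≤ l * ‖x - y‖)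
    (S : Set (EuclideanSpace ℝ (Fin d)))
    (hS : S = {z | ∀ w, h z ≤ h w})
    (hSne : S.Nonempty)
    (hstar : ℝ) (hhstar : hstar = ⨅ x, h x)
    (hPL : ∀ x, 2 * μ * (h x - hstar) ≤ ‖gradient h x‖ ^ 2) :
    ∀ x, μ * Metric.infDist x S ≤ ‖gradient h x‖ ∧
      (μ / 2) * Metric.infDist x S ^ 2 ≤ h x - hstar := by
  have hbdd : ∀ x, hstar ≤ h x := by
    obtain ⟨z, hz⟩ := hSne
    rw [hS] at hz
    intro x
    rw [hhstar]
    exact ciInf_le ⟨h z, by rintro _ ⟨w, rfl⟩; exact hz w⟩ x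
  have hQG : ∀ x, (μ / 2) * Metric.infDist x S ^ 2 ≤ h x - hstar := by
    intro x
    by_contra! hcon
    set D := Metric.infDist x S with hD
    have hD0 : 0 ≤ D := Metric.infDist_nonneg
    have hx0 := hbdd x
    have hDpos : 0 < D := by
      rcases hD0.lt_or_eq with h1 | h1
      · exact h1
      · rw [← h1] at hcon
        norm_num at hcon
        linarith
    set f : EuclideanSpace ℝ (Fin d) → ℝ := fun y => √(h y - hstar) with hf
    have hlt : f x / D < √(μ / 2) := by
      apply Real.lt_sqrt_of_sq_lt
      rw [div_pow, div_lt_iff₀ (by positivity), hf]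
      simp only
      rw [Real.sq_sqrt (by linarith)]
      exact hcon
    obtain ⟨c, hc1, hc2⟩ := exists_between hlt
    have hfx : 0 ≤ f x := Real.sqrt_nonneg _
    have hcpos : 0 < c := lt_of_le_of_lt (by positivity) hc1
    have hcD : f x < c * D := by rwa [div_lt_iff₀ hDpos] at hc1
    have hcsq : c ^ 2 < μ / 2 := (Real.lt_sqrt hcpos.le).1 hc2
    have hfc : Continuous f := (hdiff.continuous.sub continuous_const).sqrt
    obtain ⟨y, -, hymin⟩ := (isCompact_closedBall x D).exists_isMinOn
      ⟨x, Metric.mem_closedBall_self hD0⟩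
      (f := fun y => f y + c * ‖y - x‖) (by fun_prop)
    have hyx : f y + c * ‖y - x‖ ≤ f x := by
      have := hymin (Metric.mem_closedBall_self hD0)
      simpa using this
    have hglob : ∀ z, f y + c * ‖y - x‖ ≤ f z + c * ‖z - x‖ := by
      intro z
      by_cases hz : z ∈ Metric.closedBall x D
      · exact hymin hz
      · rw [Metric.mem_closedBall, not_le, dist_eq_norm] at hz
        have h1 : 0 ≤ f z := Real.sqrt_nonneg _
        nlinarith
    have hyS : y ∉ S := by
      intro hy
      have h1 := Metric.infDist_le_dist_of_mem (x := x) hy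
      rw [← hD, dist_comm, dist_eq_norm] at h1
      have h2 : 0 ≤ f y := Real.sqrt_nonneg _
      nlinarith
    have hypos : 0 < h y - hstar := by
      by_contra! hle
      apply hyS
      rw [hS]
      intro w
      have := hbdd w
      linarith
    have hfy : 0 < f y := Real.sqrt_pos.2 hypos
    set v := gradient h y with hv
    have hline : ∀ t : ℝ, 0 < t → 0 ≤ t⁻¹ * (f (y + t • (-v)) - f y) + c * ‖v‖ := by
      intro t ht
      have h1 := hglob (y + t • (-v))
      have h2 : ‖y + t • (-v) - x‖ ≤ ‖y - x‖ + t * ‖v‖ := by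
        have : y + t • (-v) - x = (y - x) + t • (-v) := by abel
        rw [this]
        refine (norm_add_le _ _).trans ?_
        rw [norm_smul, norm_neg, Real.norm_of_nonneg ht.le]
      have h3 : -(c * (t * ‖v‖)) ≤ f (y + t • (-v)) - f y := by nlinarith
      have h4 := mul_le_mul_of_nonneg_left h3 (inv_pos.2 ht).le
      have h5 : t⁻¹ * -(c * (t * ‖v‖)) = - (c * ‖v‖) := by field_simp
      linarith
    have hder : HasDerivAt (fun t : ℝ => f (y + t • (-v)))
        (-(‖v‖ ^ 2) / (2 * f y)) 0 := by
      have h1 : HasDerivAt (fun t : ℝ => y + t • (-v)) (-v) 0 := by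
        simpa using ((hasDerivAt_id (0 : ℝ)).smul_const (-v)).const_add y
      have h2 : HasFDerivAt h (InnerProductSpace.toDual ℝ _ v) (y + (0 : ℝ) • (-v)) := by
        have := (hdiff y).hasGradientAt.hasFDerivAt
        rw [zero_smul, add_zero]
        exact this
      have h3 := ((h2.comp_hasDerivAt (0 : ℝ) h1).sub_const hstar).sqrt
        (by simpa using hypos.ne')
      have h4 : (InnerProductSpace.toDual ℝ (EuclideanSpace ℝ (Fin d)) v) (-v) = -(‖v‖ ^ 2) := by
        rw [InnerProductSpace.toDual_apply_apply, inner_neg_right, real_inner_self_eq_norm_sq]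
      rw [h4] at h3
      have h5 : √((h ∘ fun t : ℝ => y + t • (-v)) 0 - hstar) = f y := by simp [hf]
      rw [h5] at h3
      exact h3
    have hlim := hder.tendsto_slope_zero_right
    have hge : 0 ≤ -(‖v‖ ^ 2) / (2 * f y) + c * ‖v‖ := by
      refine ge_of_tendsto (hlim.add_const (c * ‖v‖)) ?_
      filter_upwards [self_mem_nhdsWithin] with t ht
      simpa using hline t ht
    have hp := hPL y
    rw [← hv] at hp
    have hsq : f y ^ 2 = h y - hstar := Real.sq_sqrt hypos.le
    rw [← hsq] at hp
    have hvpos : 0 < ‖v‖ := by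
      rcases (norm_nonneg v).lt_or_eq with h1 | h1
      · exact h1
      · rw [← h1] at hp
        have : 0 < 2 * μ * f y ^ 2 := by positivity
        norm_num at hp
        linarith
    have h6 : ‖v‖ ^ 2 / (2 * f y) ≤ c * ‖v‖ := by
      rw [neg_div] at hge
      linarith
    rw [div_le_iff₀ (by positivity)] at h6
    have h7 : ‖v‖ ≤ 2 * c * f y := by
      refine le_of_mul_le_mul_right ?_ hvpos
      nlinarith
    have h8 : ‖v‖ ^ 2 ≤ (2 * c * f y) ^ 2 := by gcongr
    have h9 : 0 < f y ^ 2 := by positivity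
    nlinarith
  intro x
  refine ⟨?_, hQG x⟩
  refine abs_le_of_sq_le_sq' ?_ (norm_nonneg _) |>.2
  have h1 := hQG x
  have h2 := hPL x
  nlinarith
end

section
/- (Lemma C.1, Lipschitz properties of minimizers of the proximally regularized function) Let p > l and define f̂(x, y; z) := f(x, y) + (p/2)·‖x − z‖². For each (y, z) let x*(y, z) be the unique minimizer of x ↦ f̂(x, y; z) (unique by (p − l)-strong convexity), and for each z let x*(z) be the unique minimizer of x ↦ max_y f̂(x, y; z). Set γ₁ := p/(p − l) and γ₂ := (l + p)/(p − l). Then for all y, y', z, z': (i) ‖x*(y, z) − x*(y, z')‖ ≤ γ₁·‖z − z'‖; (ii) ‖x*(z) − x*(z')‖ ≤ γ₁·‖z − z'‖; (iii) ‖x*(y, z) − x*(y', z)‖ ≤ γ₂·‖y − y'‖. -/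
open MeasureTheory Real

lemma aux_descent_s18 {n : ℕ} (φ : EuclideanSpace ℝ (Fin n) → ℝ) (l : ℝ)
    (hd : Differentiable ℝ φ)
    (hlip : ∀ x u, ‖gradient φ x - gradient φ u‖ ≤ l * ‖x - u‖)
    (x v : EuclideanSpace ℝ (Fin n)) :
    φ x + inner ℝ (gradient φ x) v - l / 2 * ‖v‖ ^ 2 ≤ φ (x + v) := by
  set g := gradient φ x with hg
  let ψ : ℝ → ℝ := fun s => φ (x + s • v) - s * inner ℝ g v + l / 2 * s ^ 2 * ‖v‖ ^ 2
  have hder : ∀ s, HasDerivAt ψ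
      (inner ℝ (gradient φ (x + s • v)) v - inner ℝ g v + l * s * ‖v‖ ^ 2) s := by
    intro s
    have h1 : HasDerivAt (fun s : ℝ => x + s • v) v s := by
      have := ((hasDerivAt_id s).smul_const v).const_add x
      simpa using this
    have h2 : HasFDerivAt φ _ (x + s • v) := (hd (x + s • v)).hasGradientAt.hasFDerivAt
    have h3 := h2.comp_hasDerivAt s h1
    have h4 : HasDerivAt (fun s : ℝ => s * inner ℝ g v) (inner ℝ g v) s := by
      simpa using (hasDerivAt_id s).mul_const (inner ℝ g v)
    have h5 : HasDerivAt (fun s : ℝ => l / 2 * s ^ 2 * ‖v‖ ^ 2) (l * s * ‖v‖ ^ 2) s := by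
      have := ((hasDerivAt_pow 2 s).const_mul (l / 2)).mul_const (‖v‖ ^ 2)
      refine this.congr_deriv ?_
      rw [show (2 - 1 : ℕ) = 1 from rfl, pow_one]
      push_cast
      ring
    have h6 := (h3.sub h4).add h5
    rw [InnerProductSpace.toDual_apply_apply] at h6
    exact h6
  have hmono : MonotoneOn ψ (Set.Ici 0) := by
    apply monotoneOn_of_deriv_nonneg (convex_Ici 0)
    · exact fun s _ => (hder s).continuousAt.continuousWithinAt
    · exact fun s _ => (hder s).differentiableAt.differentiableWithinAt
    · intro s hs
      rw [interior_Ici] at hs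
      have hs0 : 0 < s := hs
      rw [(hder s).deriv, ← inner_sub_left]
      have h1 := abs_real_inner_le_norm (gradient φ (x + s • v) - g) v
      have h2 := hlip (x + s • v) x
      rw [add_sub_cancel_left, norm_smul, Real.norm_of_nonneg hs0.le] at h2
      have h3 := mul_le_mul_of_nonneg_right h2 (norm_nonneg v)
      have h4 := neg_abs_le (inner ℝ (gradient φ (x + s • v) - g) v)
      nlinarith
  have := hmono (a := 0) (b := 1) (by simp) (by simp) zero_le_one
  simp only [ψ] at this
  simp at this
  linarith

lemma aux_weak {n : ℕ} (φ : EuclideanSpace ℝ (Fin n) → ℝ) (l : ℝ)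
    (hd : Differentiable ℝ φ)
    (hlip : ∀ x u, ‖gradient φ x - gradient φ u‖ ≤ l * ‖x - u‖)
    (a b : EuclideanSpace ℝ (Fin n)) (t : ℝ) (h0 : 0 ≤ t) (h1 : t ≤ 1) :
    φ (a + t • (b - a)) ≤ (1 - t) * φ a + t * φ b + l / 2 * (t * (1 - t)) * ‖b - a‖ ^ 2 := by
  have ha := aux_descent_s18 φ l hd hlip (a + t • (b - a)) ((-t) • (b - a))
  have hb := aux_descent_s18 φ l hd hlip (a + t • (b - a)) ((1 - t) • (b - a))
  rw [show a + t • (b - a) + (-t) • (b - a) = a by module, inner_smul_right, norm_smul,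
    mul_pow, Real.norm_eq_abs, sq_abs] at ha
  rw [show a + t • (b - a) + (1 - t) • (b - a) = b by module, inner_smul_right, norm_smul,
    mul_pow, Real.norm_eq_abs, sq_abs] at hb
  have ha' := mul_le_mul_of_nonneg_left ha (sub_nonneg.2 h1)
  have hb' := mul_le_mul_of_nonneg_left hb h0
  linarith

lemma aux_growth {n : ℕ} (φ : EuclideanSpace ℝ (Fin n) → ℝ) (l p : ℝ)
    (hw : ∀ a b : EuclideanSpace ℝ (Fin n), ∀ t : ℝ, 0 ≤ t → t ≤ 1 →
      φ (a + t • (b - a)) ≤ (1 - t) * φ a + t * φ b + l / 2 * (t * (1 - t)) * ‖b - a‖ ^ 2)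
    (z a b : EuclideanSpace ℝ (Fin n))
    (hmin : ∀ x, φ a + (p / 2) * ‖a - z‖ ^ 2 ≤ φ x + (p / 2) * ‖x - z‖ ^ 2) :
    (p - l) / 2 * ‖b - a‖ ^ 2 ≤
      (φ b + (p / 2) * ‖b - z‖ ^ 2) - (φ a + (p / 2) * ‖a - z‖ ^ 2) := by
  have key : ∀ t : ℝ, 0 < t → t ≤ 1 → (p - l) / 2 * (1 - t) * ‖b - a‖ ^ 2 ≤
      (φ b + (p / 2) * ‖b - z‖ ^ 2) - (φ a + (p / 2) * ‖a - z‖ ^ 2) := by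
    intro t h0 h1
    have e1 := hw a b t h0.le h1
    have e2 := hmin (a + t • (b - a))
    have e3 : ‖a + t • (b - a) - z‖ ^ 2 =
        ‖a - z‖ ^ 2 + 2 * t * inner ℝ (a - z) (b - a) + t ^ 2 * ‖b - a‖ ^ 2 := by
      rw [show a + t • (b - a) - z = (a - z) + t • (b - a) by abel, norm_add_sq_real,
        inner_smul_right, norm_smul, mul_pow, Real.norm_eq_abs, sq_abs]
      ring
    have e4 : ‖b - z‖ ^ 2 =
        ‖a - z‖ ^ 2 + 2 * inner ℝ (a - z) (b - a) + ‖b - a‖ ^ 2 := by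
      rw [show b - z = (a - z) + (b - a) by abel, norm_add_sq_real]
    rw [e3] at e2
    rw [e4]
    apply le_of_mul_le_mul_left _ h0
    linarith
  have hlim : Filter.Tendsto (fun t : ℝ => (p - l) / 2 * (1 - t) * ‖b - a‖ ^ 2)
      (nhdsWithin 0 (Set.Ioi 0)) (nhds ((p - l) / 2 * (1 - 0) * ‖b - a‖ ^ 2)) := by
    apply Filter.Tendsto.mono_left _ nhdsWithin_le_nhds
    apply Continuous.tendsto (f := fun t : ℝ => (p - l) / 2 * (1 - t) * ‖b - a‖ ^ 2)
    fun_prop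
  have := le_of_tendsto hlim (b := (φ b + (p / 2) * ‖b - z‖ ^ 2) - (φ a + (p / 2) * ‖a - z‖ ^ 2)) (by
    filter_upwards [Ioc_mem_nhdsGT (zero_lt_one (α := ℝ))] with t ht
    exact key t ht.1 ht.2)
  simpa using this

lemma aux_lip {n : ℕ} (φ : EuclideanSpace ℝ (Fin n) → ℝ) (l p : ℝ) (hl : 0 < l) (hp : l < p)
    (hw : ∀ a b : EuclideanSpace ℝ (Fin n), ∀ t : ℝ, 0 ≤ t → t ≤ 1 →
      φ (a + t • (b - a)) ≤ (1 - t) * φ a + t * φ b + l / 2 * (t * (1 - t)) * ‖b - a‖ ^ 2)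
    (z z' a b : EuclideanSpace ℝ (Fin n))
    (ha : ∀ x, φ a + (p / 2) * ‖a - z‖ ^ 2 ≤ φ x + (p / 2) * ‖x - z‖ ^ 2)
    (hb : ∀ x, φ b + (p / 2) * ‖b - z'‖ ^ 2 ≤ φ x + (p / 2) * ‖x - z'‖ ^ 2) :
    ‖a - b‖ ≤ p / (p - l) * ‖z - z'‖ := by
  have g1 := aux_growth φ l p hw z a b ha
  have g2 := aux_growth φ l p hw z' b a hb
  rw [norm_sub_rev b a] at g1
  have e : ‖b - z‖ ^ 2 - ‖a - z‖ ^ 2 + ‖a - z'‖ ^ 2 - ‖b - z'‖ ^ 2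
      = 2 * inner ℝ (a - b) (z - z') := by
    simp only [norm_sub_sq_real, inner_sub_left, inner_sub_right]
    ring
  have hc := real_inner_le_norm (a - b) (z - z')
  have hpl : 0 < p - l := sub_pos.2 hp
  have hmain : (p - l) * ‖a - b‖ ^ 2 ≤ p * (‖a - b‖ * ‖z - z'‖) := by
    have := mul_le_mul_of_nonneg_left hc (hl.trans hp).le
    have e' := congrArg (fun r => p / 2 * r) e
    beta_reduce at e'
    linarith
  rw [div_mul_eq_mul_div, le_div_iff₀ hpl]
  rcases (norm_nonneg (a - b)).eq_or_lt with h | h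
  · rw [← h]
    have := mul_nonneg (hl.trans hp).le (norm_nonneg (z - z'))
    linarith
  · apply le_of_mul_le_mul_left _ h
    linarith

lemma aux_first_order {n : ℕ} (φ : EuclideanSpace ℝ (Fin n) → ℝ) (p : ℝ)
    (hd : Differentiable ℝ φ) (z a : EuclideanSpace ℝ (Fin n))
    (ha : ∀ x, φ a + (p / 2) * ‖a - z‖ ^ 2 ≤ φ x + (p / 2) * ‖x - z‖ ^ 2)
    (v : EuclideanSpace ℝ (Fin n)) :
    inner ℝ (gradient φ a) v + p * inner ℝ (a - z) v = 0 := by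
  have hmin : IsLocalMin (fun x => φ x + (p / 2) * ‖x - z‖ ^ 2) a :=
    Filter.Eventually.of_forall ha
  have h1 : HasFDerivAt φ _ a := (hd a).hasGradientAt.hasFDerivAt
  have h2 := (((hasFDerivAt_id a).sub_const z).norm_sq).const_mul (p / 2)
  have h3 := hmin.hasFDerivAt_eq_zero (h1.add h2)
  have h4 := congrArg (fun L => L v) h3
  have h5 : inner ℝ (gradient φ a) v = fderiv ℝ φ a v := by
    rw [h1.fderiv, InnerProductSpace.toDual_apply_apply]
  simp at h4
  rw [h5, ← h4, inner_sub_left]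
  ring

/-- **Lemma C.1 (Lipschitz properties of minimizers of the proximally regularized function).**
For `p > l` and `f̂(x,y;z) = f(x,y) + (p/2)‖x − z‖²`, the minimizers `x*(y,z)` of
`x ↦ f̂(x,y;z)` and `x*(z)` of `x ↦ max_y f̂(x,y;z)` satisfy the Lipschitz bounds with
constants `γ₁ = p/(p−l)` and `γ₂ = (l+p)/(p−l)`. -/
theorem proximal_minimizer_lipschitz
    {d1 d2 : ℕ}
    (f : EuclideanSpace ℝ (Fin d1) → EuclideanSpace ℝ (Fin d2) → ℝ)
    (l μ : ℝ) (hl : 0 < l) (hμ : 0 < μ)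
    (hdiff : Differentiable ℝ
      (fun q : EuclideanSpace ℝ (Fin d1) × EuclideanSpace ℝ (Fin d2) => f q.1 q.2))
    (hlipx : ∀ x₁ x₂ y₁ y₂,
      ‖gradx f x₁ y₁ - gradx f x₂ y₂‖ ≤ l * (‖x₁ - x₂‖ + ‖y₁ - y₂‖))
    (hlipy : ∀ x₁ x₂ y₁ y₂,
      ‖grady f x₁ y₁ - grady f x₂ y₂‖ ≤ l * (‖x₁ - x₂‖ + ‖y₁ - y₂‖))
    (hattain : ∀ x, ∃ ys, ∀ y, f x y ≤ f x ys)
    (hPL : ∀ x y, 2 * μ * (primal f x - f x y) ≤ ‖grady f x y‖ ^ 2)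
    (p : ℝ) (hp : l < p)
    (X : EuclideanSpace ℝ (Fin d2) → EuclideanSpace ℝ (Fin d1) → EuclideanSpace ℝ (Fin d1))
    (hX : ∀ y z x, f (X y z) y + (p / 2) * ‖X y z - z‖ ^ 2 ≤ f x y + (p / 2) * ‖x - z‖ ^ 2)
    (Xz : EuclideanSpace ℝ (Fin d1) → EuclideanSpace ℝ (Fin d1))
    (hXz : ∀ z x, (⨆ y, f (Xz z) y + (p / 2) * ‖Xz z - z‖ ^ 2) ≤
      ⨆ y, f x y + (p / 2) * ‖x - z‖ ^ 2) :
    (∀ y z z', ‖X y z - X y z'‖ ≤ (p / (p - l)) * ‖z - z'‖) ∧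
    (∀ z z', ‖Xz z - Xz z'‖ ≤ (p / (p - l)) * ‖z - z'‖) ∧
    (∀ y y' z, ‖X y z - X y' z‖ ≤ ((l + p) / (p - l)) * ‖y - y'‖) := by
  have hdx : ∀ y, Differentiable ℝ (fun x => f x y) := by
    intro y
    exact hdiff.comp (f := fun x => (x, y)) (by fun_prop)
  have hgx : ∀ y x u, ‖gradient (fun x => f x y) x - gradient (fun x => f x y) u‖
      ≤ l * ‖x - u‖ := by
    intro y x u
    simpa [gradx] using hlipx x u y y
  have hw := fun y => aux_weak (fun x => f x y) l (hdx y) (hgx y)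
  have hpl : 0 < p - l := sub_pos.2 hp
  have hbdd : ∀ x, BddAbove (Set.range (f x)) := by
    intro x
    obtain ⟨ys, h⟩ := hattain x
    exact ⟨f x ys, by rintro _ ⟨y, rfl⟩; exact h y⟩
  have hsup : ∀ x c, (⨆ y, f x y + c) = primal f x + c := by
    intro x c
    exact (ciSup_add (hbdd x) c).symm
  refine ⟨?_, ?_, ?_⟩
  · intro y z z'
    exact aux_lip (fun x => f x y) l p hl hp (hw y) z z' _ _ (hX y z) (hX y z')
  · intro z z'
    refine aux_lip (primal f) l p hl hp ?_ z z' _ _ ?_ ?_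
    · intro a b t h0 h1
      apply ciSup_le
      intro y
      have h2 := hw y a b t h0 h1
      have h3 := mul_le_mul_of_nonneg_left (le_ciSup (hbdd a) y) (sub_nonneg.2 h1)
      have h4 := mul_le_mul_of_nonneg_left (le_ciSup (hbdd b) y) h0
      simp only [primal]
      linarith
    · intro x
      have := hXz z x
      rwa [hsup, hsup] at this
    · intro x
      have := hXz z' x
      rwa [hsup, hsup] at this
  · intro y y' z
    set a := X y z with ha
    set b := X y' z with hb
    have h1 := aux_first_order (fun x => f x y) p (hdx y) z a (hX y z) (a - b)
    have h2 := aux_first_order (fun x => f x y') p (hdx y') z b (hX y' z) (a - b)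
    have h3 := hlipx b a y' y
    rw [norm_sub_rev b a, norm_sub_rev y' y] at h3
    have h4 := real_inner_le_norm (gradx f b y' - gradx f a y) (a - b)
    have h5 := mul_le_mul_of_nonneg_right h3 (norm_nonneg (a - b))
    rw [inner_sub_left] at h4
    simp only [gradx] at h4 h5
    have h6 : inner ℝ (a - z) (a - b) - inner ℝ (b - z) (a - b) = ‖a - b‖ ^ 2 := by
      rw [← inner_sub_left, sub_sub_sub_cancel_right, real_inner_self_eq_norm_sq]
    have h6' := congrArg (fun r => p * r) h6
    beta_reduce at h6'
    have hy := mul_nonneg (hl.trans hp).le (norm_nonneg (y - y'))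
    have hy' := mul_nonneg hl.le (norm_nonneg (y - y'))
    rw [div_mul_eq_mul_div, le_div_iff₀ hpl]
    rcases (norm_nonneg (a - b)).eq_or_lt with h | h
    · rw [← h]
      linarith
    · apply le_of_mul_le_mul_left _ h
      have := mul_nonneg (norm_nonneg (a - b)) hy
      linarith
end
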